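/- arXiv:1108.0367 — 3 statements merged into one kernel-verified Lean document; each statement's English description precedes it below -/
import Mathlib

section
/- Fix κ ∈ ℝ. For each element (R,v,f,r) of the Hamilton group Ha(n), define the operator ϱ(R,v,f,r) on functions φ : ℝ^n → ℂ by (ϱ(R,v,f,r)φ)(x) = exp(i κ (r − (1/2)v·f + v·x)) · φ(R⁻¹(x − f)). Then ϱ is a group homomorphism: for all (R',v',f',r'), (R,v,f,r) and every φ : ℝ^n → ℂ, ϱ(R',v',f',r')(ϱ(R,v,f,r)φ) = ϱ(R'R, v'+R'v, f'+R'f, r'+r+(1/2)(v'·(R'f) − f'·(R'v)))φ. -/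
/-- The standard Euclidean inner product on `ℝⁿ`. -/
def dot {n : ℕ} (x y : Fin n → ℝ) : ℝ := ∑ i, x i * y i

/-- For fixed `κ`, the operator `ϱ(R,v,f,r)` on functions `φ : ℝⁿ → ℂ` given by
`(ϱ(R,v,f,r)φ)(x) = exp(i κ (r − (1/2)v·f + v·x)) · φ(R⁻¹(x − f))`. -/
noncomputable def HaOp {n : ℕ} (κ : ℝ) (R : Matrix (Fin n) (Fin n) ℝ)
    (v f : Fin n → ℝ) (r : ℝ) (φ : (Fin n → ℝ) → ℂ) : (Fin n → ℝ) → ℂ :=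
  fun x => Complex.exp (Complex.I * (κ : ℂ) *
      ((r - (1 / 2) * dot v f + dot v x : ℝ) : ℂ)) * φ (R⁻¹.mulVec (x - f))

/-!
The operator `ϱ(R, v, f, r)` is the substitution `φ ↦ φ ∘ R⁻¹` followed by the Weyl operator of
`(v, f, r)`. Weyl operators compose by the Heisenberg group law, and moving a substitution by `A`
past a Weyl operator replaces `(v, f)` by `(A⁻ᵀ v, A f)`, which leaves the pairing `v · f`
unchanged. This gives a composition law for all invertible matrices; for orthogonal ones
`A⁻ᵀ = A`.
-/

section

open Matrix

variable {ι : Type*} [Fintype ι]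

/-- The Weyl operator of the element `(v, f, r)` of the Heisenberg group, acting on functions on
`ℝ^ι`. It is the value of `ϱ` at `(1, v, f, r)`, written without the inverse matrix. -/
noncomputable def weylOp (κ : ℝ) (v f : ι → ℝ) (r : ℝ) (φ : (ι → ℝ) → ℂ) : (ι → ℝ) → ℂ :=
  fun x => Complex.exp (Complex.I * κ * ((r - 1 / 2 * v ⬝ᵥ f + v ⬝ᵥ x : ℝ) : ℂ)) * φ (x - f)

theorem weylOp_weylOp (κ : ℝ) (v' f' v f : ι → ℝ) (r' r : ℝ) (φ : (ι → ℝ) → ℂ) :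
    weylOp κ v' f' r' (weylOp κ v f r φ) =
      weylOp κ (v' + v) (f' + f) (r' + r + 1 / 2 * (v' ⬝ᵥ f - f' ⬝ᵥ v)) φ := by
  funext x
  have phase_add : (r' - 1 / 2 * v' ⬝ᵥ f' + v' ⬝ᵥ x) + (r - 1 / 2 * v ⬝ᵥ f + v ⬝ᵥ (x - f')) =
      r' + r + 1 / 2 * (v' ⬝ᵥ f - f' ⬝ᵥ v) - 1 / 2 * (v' + v) ⬝ᵥ (f' + f) + (v' + v) ⬝ᵥ x := by
    simp only [add_dotProduct, dotProduct_add, dotProduct_sub, dotProduct_comm f' v]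
    ring
  simp only [weylOp]
  rw [← mul_assoc, ← Complex.exp_add, ← mul_add, ← Complex.ofReal_add, phase_add, sub_sub]

theorem weylOp_comp_inv_mulVec [DecidableEq ι] (κ : ℝ) (A : GL ι ℝ) (v f : ι → ℝ) (r : ℝ)
    (φ : (ι → ℝ) → ℂ) :
    weylOp κ v f r φ ∘ A.val⁻¹.mulVec =
      weylOp κ (A.val⁻¹ᵀ *ᵥ v) (A.val *ᵥ f) r (φ ∘ A.val⁻¹.mulVec) := by
  have inv_mulVec_mulVec : A.val⁻¹ *ᵥ (A.val *ᵥ f) = f := by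
    rw [mulVec_mulVec, nonsing_inv_mul _ ((isUnit_iff_isUnit_det _).1 A.isUnit), one_mulVec]
  have contragredient_dotProduct (y : ι → ℝ) : (A.val⁻¹ᵀ *ᵥ v) ⬝ᵥ y = v ⬝ᵥ (A.val⁻¹ *ᵥ y) := by
    rw [mulVec_transpose, dotProduct_mulVec]
  funext x
  simp only [weylOp, Function.comp_apply, contragredient_dotProduct, mulVec_sub,
    inv_mulVec_mulVec]

theorem comp_inv_mulVec_comp_inv_mulVec {S α : Type*} [CommRing S] [DecidableEq ι]
    (A B : Matrix ι ι S) (φ : (ι → S) → α) :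
    (φ ∘ B⁻¹.mulVec) ∘ A⁻¹.mulVec = φ ∘ (A * B)⁻¹.mulVec := by
  funext x
  simp only [Function.comp_apply, mulVec_mulVec, Matrix.mul_inv_rev]

theorem inv_transpose_of_mem_orthogonalGroup {S : Type*} [CommRing S] [DecidableEq ι]
    {A : Matrix ι ι S} (hA : A ∈ orthogonalGroup ι S) : A⁻¹ᵀ = A := by
  rw [inv_eq_left_inv ((mem_orthogonalGroup_iff' ι S).1 hA)]
  exact transpose_transpose A

theorem HaOp_eq_weylOp {n : ℕ} (κ : ℝ) (R : Matrix (Fin n) (Fin n) ℝ) (v f : Fin n → ℝ) (r : ℝ)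
    (φ : (Fin n → ℝ) → ℂ) : HaOp κ R v f r φ = weylOp κ v f r (φ ∘ R⁻¹.mulVec) :=
  rfl

theorem HaOp_homomorphism_general {n : ℕ} (κ : ℝ) (R' R : GL (Fin n) ℝ)
    (v' f' v f : Fin n → ℝ) (r' r : ℝ) (φ : (Fin n → ℝ) → ℂ) :
    HaOp κ R'.val v' f' r' (HaOp κ R.val v f r φ) =
      HaOp κ (R' * R).val (v' + R'.val⁻¹ᵀ *ᵥ v) (f' + R'.val *ᵥ f)
        (r' + r + 1 / 2 * (dot v' (R'.val *ᵥ f) - dot f' (R'.val⁻¹ᵀ *ᵥ v))) φ := by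
  calc HaOp κ R'.val v' f' r' (HaOp κ R.val v f r φ)
    _ = weylOp κ v' f' r' (weylOp κ v f r (φ ∘ R.val⁻¹.mulVec) ∘ R'.val⁻¹.mulVec) := by
      rw [HaOp_eq_weylOp, HaOp_eq_weylOp]
    _ = weylOp κ v' f' r' (weylOp κ (R'.val⁻¹ᵀ *ᵥ v) (R'.val *ᵥ f) r
          (φ ∘ (R' * R).val⁻¹.mulVec)) := by
      rw [weylOp_comp_inv_mulVec, comp_inv_mulVec_comp_inv_mulVec, Units.val_mul]
    _ = _ := weylOp_weylOp ..

end

/-- `ϱ` is a group homomorphism from the Hamilton group `Ha(n)` (with multiplication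
`(R',v',f',r')·(R,v,f,r) = (R'R, v'+R'v, f'+R'f, r'+r+(1/2)(v'·(R'f) − f'·(R'v)))`,
`R, R' ∈ SO(n)`) to operators on functions `φ : ℝⁿ → ℂ`. -/
theorem HaOp_homomorphism {n : ℕ} (κ : ℝ) (R' R : Matrix (Fin n) (Fin n) ℝ)
    (hR' : R' ∈ Matrix.specialOrthogonalGroup (Fin n) ℝ)
    (hR : R ∈ Matrix.specialOrthogonalGroup (Fin n) ℝ)
    (v' f' v f : Fin n → ℝ) (r' r : ℝ) (φ : (Fin n → ℝ) → ℂ) :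
    HaOp κ R' v' f' r' (HaOp κ R v f r φ)
      = HaOp κ (R' * R) (v' + R'.mulVec v) (f' + R'.mulVec f)
          (r' + r + (1 / 2) * (dot v' (R'.mulVec f) - dot f' (R'.mulVec v))) φ := by
  simpa only [Units.val_mul, Unitary.val_toUnits_apply, inv_transpose_of_mem_orthogonalGroup hR'.1]
    using HaOp_homomorphism_general κ (Unitary.toUnits ⟨R', hR'.1⟩) (Unitary.toUnits ⟨R, hR.1⟩)
      v' f' v f r' r φ
end

section
/- The set of real (n+3)×(n+3) matrices of the block form M(R,v,q,t,s) = [[R, v, 0, q],[0, 1, 0, t],[vᵀR, v²/2, 1, s],[0, 0, 0, 1]] with R ∈ SO(n), v,q ∈ ℝ^n, t,s ∈ ℝ is closed under matrix multiplication, and the product realizes the Galilei group law: M(R',v',q',t',s')·M(R,v,q,t,s) = M(R'R, v'+R'v, q'+R'q+v't, t'+t, s'+s+v'·(R'q)+(1/2)t|v'|²). -/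
/-- The `(n+3)×(n+3)` real matrix
`M(R,v,q,t,s) = [[R, v, 0, q],[0, 1, 0, t],[vᵀR, v²/2, 1, s],[0, 0, 0, 1]]`
(indexed by `Fin n ⊕ Fin 3`), realizing the central extension of the Galilei group. -/
noncomputable def GalM {n : ℕ} (R : Matrix (Fin n) (Fin n) ℝ) (v q : Fin n → ℝ)
    (t s : ℝ) : Matrix (Fin n ⊕ Fin 3) (Fin n ⊕ Fin 3) ℝ :=
  Matrix.of fun i j =>
    match i, j with
    | Sum.inl i, Sum.inl j => R i j
    | Sum.inl i, Sum.inr j => if j = 0 then v i else if j = 1 then 0 else q i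
    | Sum.inr i, Sum.inl j => if i = 1 then ∑ k, v k * R k j else 0
    | Sum.inr i, Sum.inr j =>
        if i = 0 then (if j = 0 then 1 else if j = 1 then 0 else t)
        else if i = 1 then (if j = 0 then dot v v / 2 else if j = 1 then 1 else s)
        else (if j = 2 then 1 else 0)

/-!
With `w` and `a` free in place of `vᵀR` and `v²/2`, the block matrices multiply by
`w'' = w'R + w` and `a'' = a' + w'·v + a` for arbitrary `R'` and `R`. Orthogonality of the left
factor `R'` makes the constraints `w = vᵀR` and `a = v²/2` survive the product:
`(v' + R'v)ᵀR'R = v'ᵀR'R + vᵀR` and `|v' + R'v|² = |v'|² + 2 v'ᵀR'v + |v|²`.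
-/

open Matrix

section OrthogonalGroup

variable {l m 𝕜 : Type*} [Fintype m] [DecidableEq m] [CommRing 𝕜] {Q : Matrix m m 𝕜}

theorem mulVec_vecMul_of_mem_orthogonalGroup (hQ : Q ∈ orthogonalGroup m 𝕜) (v : m → 𝕜) :
    (Q *ᵥ v) ᵥ* Q = v := by
  rw [← mulVec_transpose, mulVec_mulVec, (mem_orthogonalGroup_iff' m 𝕜).mp hQ, one_mulVec]

theorem mulVec_dotProduct_mulVec_of_mem_orthogonalGroup (hQ : Q ∈ orthogonalGroup m 𝕜)
    (v w : m → 𝕜) : Q *ᵥ v ⬝ᵥ Q *ᵥ w = v ⬝ᵥ w := by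
  rw [dotProduct_mulVec, mulVec_vecMul_of_mem_orthogonalGroup hQ]

theorem add_mulVec_vecMul_mul_of_mem_orthogonalGroup (hQ : Q ∈ orthogonalGroup m 𝕜)
    (u v : m → 𝕜) (R : Matrix m l 𝕜) :
    (u + Q *ᵥ v) ᵥ* (Q * R) = (u ᵥ* Q) ᵥ* R + v ᵥ* R := by
  rw [← vecMul_vecMul, add_vecMul, mulVec_vecMul_of_mem_orthogonalGroup hQ, add_vecMul]

theorem add_mulVec_dotProduct_self_of_mem_orthogonalGroup (hQ : Q ∈ orthogonalGroup m 𝕜)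
    (u v : m → 𝕜) :
    (u + Q *ᵥ v) ⬝ᵥ (u + Q *ᵥ v) = u ⬝ᵥ u + 2 * (u ᵥ* Q ⬝ᵥ v) + v ⬝ᵥ v := by
  rw [add_dotProduct, dotProduct_add, dotProduct_add,
    mulVec_dotProduct_mulVec_of_mem_orthogonalGroup hQ, dotProduct_comm (Q *ᵥ v) u,
    dotProduct_mulVec]
  ring

end OrthogonalGroup

section BorderedMatrix

variable {m 𝕜 : Type*}

/-- The block matrix `[[R, v, 0, q], [0, 1, 0, t], [w, a, 1, s], [0, 0, 0, 1]]`, with `v` and `q` as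
columns and `w` as a row. It is the shape of `GalM` with the entries `vᵀR` and `v²/2` replaced by
independent parameters `w` and `a`, so that its products can be computed for arbitrary `R`. -/
def borderedMatrix [Zero 𝕜] [One 𝕜] (R : Matrix m m 𝕜) (v w q : m → 𝕜) (t a s : 𝕜) :
    Matrix (m ⊕ Fin 3) (m ⊕ Fin 3) 𝕜 :=
  fromBlocks R (of ![v, 0, q])ᵀ (of ![0, w, 0]) !![1, 0, t; a, 1, s; 0, 0, 1]

theorem borderedMatrix_mul [Fintype m] [CommSemiring 𝕜] (R' R : Matrix m m 𝕜)
    (v' w' q' v w q : m → 𝕜) (t' a' s' t a s : 𝕜) :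
    borderedMatrix R' v' w' q' t' a' s' * borderedMatrix R v w q t a s =
      borderedMatrix (R' * R) (v' + R' *ᵥ v) (w' ᵥ* R + w) (q' + R' *ᵥ q + t • v') (t' + t)
        (a' + w' ⬝ᵥ v + a) (s' + s + w' ⬝ᵥ q + t * a') := by
  rw [borderedMatrix, borderedMatrix, fromBlocks_multiply, borderedMatrix]
  congr 1
  · ext i j
    simp [mul_apply, Fin.sum_univ_three]
  · ext i j
    fin_cases j <;>
      simp [mul_apply, Fin.sum_univ_three, mulVec, dotProduct, mul_comm, add_comm, add_assoc]
  · ext i j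
    fin_cases i <;> simp
  · ext i j
    fin_cases i <;> fin_cases j <;>
      simp [vecMul, dotProduct, mul_comm, add_comm, add_left_comm, add_assoc]

end BorderedMatrix

section GalileiMatrix

variable {n : ℕ}

theorem dot_eq_dotProduct (x y : Fin n → ℝ) : dot x y = x ⬝ᵥ y := rfl

theorem GalM_eq_borderedMatrix (R : Matrix (Fin n) (Fin n) ℝ) (v q : Fin n → ℝ) (t s : ℝ) :
    GalM R v q t s = borderedMatrix R v (v ᵥ* R) q t (v ⬝ᵥ v / 2) s := by
  ext (i | i) (j | j)
  · rfl
  · fin_cases j <;> rfl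
  · fin_cases i <;> rfl
  · fin_cases i <;> fin_cases j <;> rfl

theorem GalM_mul {R' : Matrix (Fin n) (Fin n) ℝ} (hR' : R' ∈ orthogonalGroup (Fin n) ℝ)
    (R : Matrix (Fin n) (Fin n) ℝ) (v' q' v q : Fin n → ℝ) (t' s' t s : ℝ) :
    GalM R' v' q' t' s' * GalM R v q t s =
      GalM (R' * R) (v' + R' *ᵥ v) (q' + R' *ᵥ q + t • v') (t' + t)
        (s' + s + dot v' (R' *ᵥ q) + (1 / 2) * t * dot v' v') := by
  simp only [GalM_eq_borderedMatrix, borderedMatrix_mul, dot_eq_dotProduct]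
  congr 1
  · exact (add_mulVec_vecMul_mul_of_mem_orthogonalGroup hR' v' v R).symm
  · rw [add_mulVec_dotProduct_self_of_mem_orthogonalGroup hR']
    ring
  · rw [dotProduct_mulVec]
    ring

end GalileiMatrix

theorem galilei_matrix_realization_general {n : ℕ} {S : Submonoid (Matrix (Fin n) (Fin n) ℝ)}
    (hS : S ≤ orthogonalGroup (Fin n) ℝ) :
    (∀ R' R : Matrix (Fin n) (Fin n) ℝ, R' ∈ S →
      ∀ (v' q' v q : Fin n → ℝ) (t' s' t s : ℝ),
        GalM R' v' q' t' s' * GalM R v q t s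
          = GalM (R' * R) (v' + R' *ᵥ v) (q' + R' *ᵥ q + t • v') (t' + t)
              (s' + s + dot v' (R' *ᵥ q) + (1 / 2) * t * dot v' v')) ∧
    (∀ A B : Matrix (Fin n ⊕ Fin 3) (Fin n ⊕ Fin 3) ℝ,
      (∃ R ∈ S, ∃ (v q : Fin n → ℝ) (t s : ℝ), A = GalM R v q t s) →
      (∃ R ∈ S, ∃ (v q : Fin n → ℝ) (t s : ℝ), B = GalM R v q t s) →
      (∃ R ∈ S, ∃ (v q : Fin n → ℝ) (t s : ℝ), A * B = GalM R v q t s)) := by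
  refine ⟨fun R' R hR' => GalM_mul (hS hR') R, ?_⟩
  rintro _ _ ⟨R', hR', v', q', t', s', rfl⟩ ⟨R, hR, v, q, t, s, rfl⟩
  exact ⟨R' * R, mul_mem hR' hR, _, _, _, _, GalM_mul (hS hR') R v' q' v q t' s' t s⟩

/-- The set of matrices `M(R,v,q,t,s)` with `R ∈ SO(n)` is closed under matrix
multiplication, and the matrix product realizes the Galilei group law
`M(R',v',q',t',s')·M(R,v,q,t,s)
  = M(R'R, v'+R'v, q'+R'q+v't, t'+t, s'+s+v'·(R'q)+(1/2)t|v'|²)`. -/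
theorem galilei_matrix_realization {n : ℕ} :
    (∀ (R' R : Matrix (Fin n) (Fin n) ℝ),
      R' ∈ Matrix.specialOrthogonalGroup (Fin n) ℝ →
      R ∈ Matrix.specialOrthogonalGroup (Fin n) ℝ →
      ∀ (v' q' v q : Fin n → ℝ) (t' s' t s : ℝ),
        GalM R' v' q' t' s' * GalM R v q t s
          = GalM (R' * R) (v' + R'.mulVec v) (q' + R'.mulVec q + t • v') (t' + t)
              (s' + s + dot v' (R'.mulVec q) + (1 / 2) * t * dot v' v')) ∧
    (∀ A B : Matrix (Fin n ⊕ Fin 3) (Fin n ⊕ Fin 3) ℝ,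
      (∃ R ∈ Matrix.specialOrthogonalGroup (Fin n) ℝ, ∃ (v q : Fin n → ℝ) (t s : ℝ),
        A = GalM R v q t s) →
      (∃ R ∈ Matrix.specialOrthogonalGroup (Fin n) ℝ, ∃ (v q : Fin n → ℝ) (t s : ℝ),
        B = GalM R v q t s) →
      (∃ R ∈ Matrix.specialOrthogonalGroup (Fin n) ℝ, ∃ (v q : Fin n → ℝ) (t s : ℝ),
        A * B = GalM R v q t s)) := by
  have ⟨group_law, mul_closed⟩ :=
    galilei_matrix_realization_general (S := specialOrthogonalGroup (Fin n) ℝ) inf_le_left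
  exact ⟨fun R' R hR' _ => group_law R' R hR', mul_closed⟩
end

section
/- The set of real (2n+3)×(2n+3) matrices of the block form M(R,v,f,r,q,t,p,ε) = [[R, 0, 0, f, p],[0, R, 0, v, q],[vᵀR, −fᵀR, 1, r, ε],[0, 0, 0, 1, t],[0, 0, 0, 0, 1]] with R ∈ SO(n), v,f,q,p ∈ ℝ^n and r,t,ε ∈ ℝ is closed under matrix multiplication, and the product realizes the inhomogeneous Hamilton group law: M(R',v',f',r',q',t',p',ε')·M(R,v,f,r,q,t,p,ε) = M(R'R, v'+R'v, f'+R'f, r'+r+v'·(R'f)−f'·(R'v), q'+R'q+v't, t'+t, p'+R'p+f't, ε'+ε+v'·(R'p)−f'·(R'q)+r't). -/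
/-- The `(2n+3)×(2n+3)` real matrix
`M(R,v,f,r,q,t,p,ε) = [[R,0,0,f,p],[0,R,0,v,q],[vᵀR,−fᵀR,1,r,ε],[0,0,0,1,t],[0,0,0,0,1]]`
(indexed by `Fin n ⊕ Fin n ⊕ Fin 3`), realizing the inhomogeneous Hamilton group. -/
noncomputable def IHaM {n : ℕ} (R : Matrix (Fin n) (Fin n) ℝ) (v f : Fin n → ℝ)
    (r : ℝ) (q : Fin n → ℝ) (t : ℝ) (p : Fin n → ℝ) (ε : ℝ) :
    Matrix (Fin n ⊕ Fin n ⊕ Fin 3) (Fin n ⊕ Fin n ⊕ Fin 3) ℝ :=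
  Matrix.of fun i j =>
    match i, j with
    | Sum.inl i, Sum.inl j => R i j
    | Sum.inl _, Sum.inr (Sum.inl _) => 0
    | Sum.inl i, Sum.inr (Sum.inr c) => if c = 0 then 0 else if c = 1 then f i else p i
    | Sum.inr (Sum.inl _), Sum.inl _ => 0
    | Sum.inr (Sum.inl i), Sum.inr (Sum.inl j) => R i j
    | Sum.inr (Sum.inl i), Sum.inr (Sum.inr c) =>
        if c = 0 then 0 else if c = 1 then v i else q i
    | Sum.inr (Sum.inr k), Sum.inl j => if k = 0 then ∑ m, v m * R m j else 0
    | Sum.inr (Sum.inr k), Sum.inr (Sum.inl j) =>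
        if k = 0 then -∑ m, f m * R m j else 0
    | Sum.inr (Sum.inr k), Sum.inr (Sum.inr c) =>
        if k = 0 then (if c = 0 then 1 else if c = 1 then r else ε)
        else if k = 1 then (if c = 0 then 0 else if c = 1 then 1 else t)
        else (if c = 2 then 1 else 0)

/-!
Write `w = (f, v)`, `z = (p, q)` and `A = diag(R, R)`. In these variables the matrix is
`[[A, 0, w, z], [wᵀJA, 1, r, ε], [0, 0, 1, t], [0, 0, 0, 1]]`, where `J` is the standard symplectic
form. Multiplying two such matrices gives the lower-left row `w'ᵀJA'A + wᵀJA`; it is again of the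
required form `(w' + A'w)ᵀJA'A` because `A'` preserves `J`, which for `A' = diag(R', R')` is the
orthogonality of `R'`.
-/

open Matrix

section Bargmann

variable {ι α : Type*} [Fintype ι] [CommSemiring α]

/-- The matrix `[[A, 0, w, z], [wᵀBA, 1, r, ε], [0, 0, 1, t], [0, 0, 0, 1]]` attached to a bilinear
form `B`. For `A` orthogonal, `B = 1` and `r = ½ wᵀw` these are Bargmann's matrices of the centrally
extended Galilei group; the Hamilton group is the case of the symplectic form `B = J`. -/
def bargmannMatrix (B A : Matrix ι ι α) (w : ι → α) (r : α) (z : ι → α) (t ε : α) :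
    Matrix (ι ⊕ Fin 3) (ι ⊕ Fin 3) α :=
  fromBlocks A (of ![0, w, z])ᵀ (of ![w ᵥ* B ᵥ* A, 0, 0]) !![1, r, ε; 0, 1, t; 0, 0, 1]

lemma mulVec_vecMul_vecMul_of_isometry {B A : Matrix ι ι α} (hA : Aᵀ * B * A = B) (w : ι → α) :
    (A *ᵥ w) ᵥ* B ᵥ* A = w ᵥ* B := by
  rw [← vecMul_transpose, vecMul_vecMul, vecMul_vecMul, ← Matrix.mul_assoc, hA]

lemma of_row_zero_zero_mul_transpose_of (u w z : ι → α) :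
    of ![u, 0, 0] * (of ![0, w, z])ᵀ = !![0, u ⬝ᵥ w, u ⬝ᵥ z; 0, 0, 0; 0, 0, 0] := by
  ext i j
  fin_cases i <;> fin_cases j <;> simp [mul_apply, dotProduct]

theorem bargmannMatrix_mul {B A' : Matrix ι ι α} (hA' : A'ᵀ * B * A' = B) (A : Matrix ι ι α)
    (w' w z' z : ι → α) (r' r t' t ε' ε : α) :
    bargmannMatrix B A' w' r' z' t' ε' * bargmannMatrix B A w r z t ε =
      bargmannMatrix B (A' * A) (w' + A' *ᵥ w) (r' + r + w' ᵥ* B ⬝ᵥ A' *ᵥ w)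
        (z' + A' *ᵥ z + t • w') (t' + t) (ε' + ε + w' ᵥ* B ⬝ᵥ A' *ᵥ z + r' * t) := by
  have row_eq : (w' + A' *ᵥ w) ᵥ* B ᵥ* (A' * A) = w' ᵥ* B ᵥ* A' ᵥ* A + w ᵥ* B ᵥ* A := by
    rw [← vecMul_vecMul, add_vecMul, add_vecMul, mulVec_vecMul_vecMul_of_isometry hA', add_vecMul]
  simp only [bargmannMatrix, fromBlocks_multiply, row_eq, of_row_zero_zero_mul_transpose_of,
    dotProduct_mulVec]
  congr 1 <;> ext i j
  · simp [mul_apply, Fin.sum_univ_three]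
  · fin_cases j <;> simp [mul_apply, Fin.sum_univ_three, mulVec, dotProduct] <;> ring
  · fin_cases i <;> simp [vecHead, vecTail]
  · fin_cases i <;> fin_cases j <;> simp <;> ring

end Bargmann

section Hamilton

variable {ι α : Type*} [Fintype ι] [DecidableEq ι] [CommRing α]

/-- The block matrix
`[[R, 0, 0, f, p], [0, R, 0, v, q], [vᵀR, -fᵀR, 1, r, ε], [0, 0, 0, 1, t], [0, 0, 0, 0, 1]]` of the
inhomogeneous Hamilton group, encoded as the `bargmannMatrix` of the symplectic form: force and
momentum come before velocity and position, so that `(f, v)ᵀJ = (v, -f)`. -/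
def hamiltonMatrix (R : Matrix ι ι α) (v f : ι → α) (r : α) (q : ι → α) (t : α) (p : ι → α)
    (ε : α) : Matrix (ι ⊕ ι ⊕ Fin 3) (ι ⊕ ι ⊕ Fin 3) α :=
  (bargmannMatrix (J ι α) (fromBlocks R 0 0 R) (Sum.elim f v) r (Sum.elim p q) t ε).reindex
    (Equiv.sumAssoc ι ι (Fin 3)) (Equiv.sumAssoc ι ι (Fin 3))

lemma sumElim_vecMul_J (f v : ι → α) : Sum.elim f v ᵥ* J ι α = Sum.elim v (-f) := by
  simp [J, vecMul_fromBlocks, vecMul_neg]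

lemma sumElim_vecMul_J_dotProduct_sumElim (f v x y : ι → α) :
    Sum.elim f v ᵥ* J ι α ⬝ᵥ Sum.elim x y = v ⬝ᵥ x - f ⬝ᵥ y := by
  simp [sumElim_vecMul_J, sub_eq_add_neg]

lemma fromBlocks_diagonal_mem_symplecticGroup {R : Matrix ι ι α} (hR : R ∈ orthogonalGroup ι α) :
    fromBlocks R 0 0 R ∈ symplecticGroup ι α := by
  simpa [SymplecticGroup.fromBlocks_mem_iff] using (mem_orthogonalGroup_iff' ι α).1 hR

theorem hamiltonMatrix_mul {R' : Matrix ι ι α} (hR' : R' ∈ orthogonalGroup ι α)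
    (R : Matrix ι ι α) (v' f' q' p' v f q p : ι → α) (r' t' ε' r t ε : α) :
    hamiltonMatrix R' v' f' r' q' t' p' ε' * hamiltonMatrix R v f r q t p ε =
      hamiltonMatrix (R' * R) (v' + R' *ᵥ v) (f' + R' *ᵥ f)
        (r' + r + v' ⬝ᵥ R' *ᵥ f - f' ⬝ᵥ R' *ᵥ v) (q' + R' *ᵥ q + t • v') (t' + t)
        (p' + R' *ᵥ p + t • f') (ε' + ε + v' ⬝ᵥ R' *ᵥ p - f' ⬝ᵥ R' *ᵥ q + r' * t) := by
  have isometry := SymplecticGroup.mem_iff'.1 (fromBlocks_diagonal_mem_symplecticGroup hR')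
  have mulVec_sumElim (x y : ι → α) :
      fromBlocks R' 0 0 R' *ᵥ Sum.elim x y = Sum.elim (R' *ᵥ x) (R' *ᵥ y) := by
    simp [fromBlocks_mulVec]
  have smul_sumElim (x y : ι → α) : t • Sum.elim x y = Sum.elim (t • x) (t • y) := by
    ext (i | i) <;> rfl
  have diagonal_mul : fromBlocks R' 0 0 R' * fromBlocks R 0 0 R =
      fromBlocks (R' * R) 0 0 (R' * R) := by
    simp [fromBlocks_multiply]
  simp only [hamiltonMatrix, reindex_apply, submatrix_mul_equiv, bargmannMatrix_mul isometry,
    diagonal_mul, mulVec_sumElim, smul_sumElim, sumElim_vecMul_J_dotProduct_sumElim,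
    ← Sum.elim_add_add, add_sub_assoc]

theorem IHaM_eq_hamiltonMatrix {n : ℕ} (R : Matrix (Fin n) (Fin n) ℝ) (v f : Fin n → ℝ) (r : ℝ)
    (q : Fin n → ℝ) (t : ℝ) (p : Fin n → ℝ) (ε : ℝ) :
    IHaM R v f r q t p ε = hamiltonMatrix R v f r q t p ε := by
  ext (i | i | i) (j | j | j) <;> (try fin_cases i) <;> (try fin_cases j) <;>
    simp [IHaM, hamiltonMatrix, bargmannMatrix, sumElim_vecMul_J, vecMul_fromBlocks, neg_vecMul,
      vecMul, dotProduct]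

theorem inhomogeneous_hamilton_matrix_realization_general {Γ : Submonoid (Matrix ι ι α)}
    (hΓ : Γ ≤ orthogonalGroup ι α) :
    (∀ R' ∈ orthogonalGroup ι α, ∀ (R : Matrix ι ι α)
        (v' f' q' p' v f q p : ι → α) (r' t' ε' r t ε : α),
      hamiltonMatrix R' v' f' r' q' t' p' ε' * hamiltonMatrix R v f r q t p ε =
        hamiltonMatrix (R' * R) (v' + R' *ᵥ v) (f' + R' *ᵥ f)
          (r' + r + v' ⬝ᵥ R' *ᵥ f - f' ⬝ᵥ R' *ᵥ v) (q' + R' *ᵥ q + t • v') (t' + t)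
          (p' + R' *ᵥ p + t • f') (ε' + ε + v' ⬝ᵥ R' *ᵥ p - f' ⬝ᵥ R' *ᵥ q + r' * t)) ∧
    (∀ A B : Matrix (ι ⊕ ι ⊕ Fin 3) (ι ⊕ ι ⊕ Fin 3) α,
      (∃ R ∈ Γ, ∃ (v f q p : ι → α) (r t ε : α), A = hamiltonMatrix R v f r q t p ε) →
      (∃ R ∈ Γ, ∃ (v f q p : ι → α) (r t ε : α), B = hamiltonMatrix R v f r q t p ε) →
      ∃ R ∈ Γ, ∃ (v f q p : ι → α) (r t ε : α), A * B = hamiltonMatrix R v f r q t p ε) := by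
  refine ⟨fun R' hR' R => hamiltonMatrix_mul hR' R, ?_⟩
  rintro _ _ ⟨R', hR', v', f', q', p', r', t', ε', rfl⟩ ⟨R, hR, v, f, q, p, r, t, ε, rfl⟩
  exact ⟨R' * R, mul_mem hR' hR, _, _, _, _, _, _, _, hamiltonMatrix_mul (hΓ hR') R ..⟩

end Hamilton

/-- The set of matrices `M(R,v,f,r,q,t,p,ε)` with `R ∈ SO(n)` is closed under matrix
multiplication, and the matrix product realizes the inhomogeneous Hamilton group law
`M(R',v',f',r',q',t',p',ε')·M(R,v,f,r,q,t,p,ε)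
  = M(R'R, v'+R'v, f'+R'f, r'+r+v'·(R'f)−f'·(R'v), q'+R'q+v't, t'+t, p'+R'p+f't,
      ε'+ε+v'·(R'p)−f'·(R'q)+r't)`. -/
theorem inhomogeneous_hamilton_matrix_realization {n : ℕ} :
    (∀ (R' R : Matrix (Fin n) (Fin n) ℝ),
      R' ∈ Matrix.specialOrthogonalGroup (Fin n) ℝ →
      R ∈ Matrix.specialOrthogonalGroup (Fin n) ℝ →
      ∀ (v' f' q' p' v f q p : Fin n → ℝ) (r' t' ε' r t ε : ℝ),
        IHaM R' v' f' r' q' t' p' ε' * IHaM R v f r q t p ε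
          = IHaM (R' * R) (v' + R'.mulVec v) (f' + R'.mulVec f)
              (r' + r + dot v' (R'.mulVec f) - dot f' (R'.mulVec v))
              (q' + R'.mulVec q + t • v') (t' + t) (p' + R'.mulVec p + t • f')
              (ε' + ε + dot v' (R'.mulVec p) - dot f' (R'.mulVec q) + r' * t)) ∧
    (∀ A B : Matrix (Fin n ⊕ Fin n ⊕ Fin 3) (Fin n ⊕ Fin n ⊕ Fin 3) ℝ,
      (∃ R ∈ Matrix.specialOrthogonalGroup (Fin n) ℝ,
        ∃ (v f q p : Fin n → ℝ) (r t ε : ℝ), A = IHaM R v f r q t p ε) →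
      (∃ R ∈ Matrix.specialOrthogonalGroup (Fin n) ℝ,
        ∃ (v f q p : Fin n → ℝ) (r t ε : ℝ), B = IHaM R v f r q t p ε) →
      (∃ R ∈ Matrix.specialOrthogonalGroup (Fin n) ℝ,
        ∃ (v f q p : Fin n → ℝ) (r t ε : ℝ), A * B = IHaM R v f r q t p ε)) := by
  simp only [IHaM_eq_hamiltonMatrix]
  exact (inhomogeneous_hamilton_matrix_realization_general inf_le_left).imp_left
    fun product_law R' R hR' _ => product_law R' hR'.1 R
end
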